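/- (Implementability relationships.) Every global protocol that is implementable under the bag network architecture is implementable under the p2p network architecture, and every global protocol that is implementable under the p2p network architecture is implementable under the senderbox network architecture. -/

import Mathlib

/-! The same CLTS `T` that implements the protocol under the weaker architecture also implements
it under the stronger one (p2p versus bag, senderbox versus p2p).

Two facts carry the argument. First, the architectures are nested: every word compliant with the
stronger architecture `N'` is compliant with the weaker one `N`, and after such a word the channels
of `N'` are all empty iff those of `N` are (`simulation_run`). Hence every `N'`-trace of `T` is an
`N`-trace, and an `N`-trace is an `N'`-trace as soon as its prefixes are `N'`-compliant.

Second, FIFO architectures in which every channel has a single sender (p2p and senderbox) are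
prefix extensible (`fifo_extend`): a compliant word `w` whose local projections are prefixes of
those of `split ρ` can be completed to a compliant word with the projections of `split ρ`. The
completion goes through the events of `split ρ` in order and appends those not performed yet.
Sends are always enabled. When the receive of `m` is due, the receives performed on its channel
are exactly those preceding it in `split ρ`: were there more, FIFO order would force one of
them to be a further receive of `m`, which the projection to the receiver excludes. So `m` is the
head of its channel. Once everything in a finite part of a run is completed the channels are empty,
and the rest of the run, even an infinite one, can be appended as it is (`extend_word`).

Thus any `N'`-trace of `T`, being an initial part of a maximal `N`-trace, is consistent with a
run of the protocol and extends to a word of the `N'`-semantics; that word is again an `N`-trace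
of `T`. This gives both the inclusion of the infinite language in the infinite semantics and
deadlock freedom. -/

/-- Asynchronous events: send events `p▷q!v` and receive events `p▷q?v`. -/
inductive Event (P V : Type) where
  | send (p q : P) (v : V)
  | recv (p q : P) (v : V)
deriving DecidableEq

/-- The active participant of an event: the sender of a send, the receiver of a receive. -/
def Event.active {P V : Type} : Event P V → P
  | .send p _ _ => p
  | .recv _ q _ => q

/-- A network architecture: channels `C`, buffer contents `B`, a channel map,
partial insert/remove operations, and an empty buffer. -/
structure NetArch (P V C B : Type) where
  chan : P → P → C
  insert : P × P × V → B → Option B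
  remove : P × P × V → B → Option B
  b0 : B

variable {P V C B : Type}

/-- Executing a single event on a channel state. -/
def NetArch.step [DecidableEq C] (N : NetArch P V C B) :
    Event P V → (C → B) → Option (C → B)
  | .send p q v, ξ => (N.insert (p, q, v) (ξ (N.chan p q))).map (Function.update ξ (N.chan p q))
  | .recv p q v, ξ => (N.remove (p, q, v) (ξ (N.chan p q))).map (Function.update ξ (N.chan p q))

/-- Executing a finite word of events from a channel state. -/
def NetArch.runFrom [DecidableEq C] (N : NetArch P V C B) :
    List (Event P V) → (C → B) → Option (C → B)
  | [], ξ => some ξ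
  | e :: w, ξ => (N.step e ξ).bind (N.runFrom w)

/-- The initial channel state: every channel holds the empty buffer. -/
def NetArch.init (N : NetArch P V C B) : C → B := fun _ => N.b0

/-- A finite word is channel-compliant if executing it from the initial channel
state is defined at every step. -/
def NetArch.compliant [DecidableEq C] (N : NetArch P V C B) (w : List (Event P V)) : Prop :=
  (N.runFrom w N.init).isSome

/-- A finite word is channel-matched if it is channel-compliant and reaches the
initial (all-empty) channel state. -/
def NetArch.matched [DecidableEq C] (N : NetArch P V C B) (w : List (Event P V)) : Prop :=
  N.runFrom w N.init = some N.init

/-- Projection of a word onto the events in which participant `r` is active. -/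
def proj [DecidableEq P] (r : P) (w : List (Event P V)) : List (Event P V) :=
  w.filter (fun e => decide (e.active = r))

/-- Equality under local projection. -/
def equivP [DecidableEq P] (w₁ w₂ : List (Event P V)) : Prop :=
  ∀ r : P, proj r w₁ = proj r w₂

/-- `split` replaces every synchronous message exchange `(p,q,v)` by the two
consecutive asynchronous events `p▷q!v · p▷q?v`. -/
def split : List (P × P × V) → List (Event P V)
  | [] => []
  | m :: ρ => Event.send m.1 m.2.1 m.2.2 :: Event.recv m.1 m.2.1 m.2.2 :: split ρ

/-- FIFO insertion: append at the tail (always defined). -/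
def fifoInsert {M : Type} (m : M) (b : List M) : Option (List M) := some (b ++ [m])

/-- FIFO removal: defined iff the buffer has head `m`, removing the head. -/
def fifoRemove {M : Type} [DecidableEq M] (m : M) : List M → Option (List M)
  | [] => none
  | m' :: b => if m' = m then some b else none

/-- Multiset insertion: add one occurrence (always defined). -/
def bagInsert {M : Type} (m : M) (b : Multiset M) : Option (Multiset M) := some (m ::ₘ b)

/-- Multiset removal: defined iff `m ∈ b`, deleting one occurrence. -/
def bagRemove {M : Type} [DecidableEq M] (m : M) (b : Multiset M) : Option (Multiset M) :=
  if m ∈ b then some (b.erase m) else none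

/-- Peer-to-peer FIFO architecture: one FIFO channel per sender-receiver pair. -/
def p2p (P V : Type) [DecidableEq P] [DecidableEq V] :
    NetArch P V (P × P) (List (P × P × V)) :=
  ⟨fun p q => (p, q), fifoInsert, fifoRemove, []⟩

/-- Senderbox FIFO architecture: one FIFO channel per sender. -/
def sb (P V : Type) [DecidableEq P] [DecidableEq V] :
    NetArch P V P (List (P × P × V)) :=
  ⟨fun p _ => p, fifoInsert, fifoRemove, []⟩

/-- Mailbox FIFO architecture: one FIFO channel per receiver. -/
def mb (P V : Type) [DecidableEq P] [DecidableEq V] :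
    NetArch P V P (List (P × P × V)) :=
  ⟨fun _ q => q, fifoInsert, fifoRemove, []⟩

/-- Monobox FIFO architecture: a single FIFO channel shared by all pairs. -/
def monob (P V : Type) [DecidableEq P] [DecidableEq V] :
    NetArch P V Unit (List (P × P × V)) :=
  ⟨fun _ _ => (), fifoInsert, fifoRemove, []⟩

/-- Bag architecture: a single channel holding a multiset of messages. -/
def bag (P V : Type) [DecidableEq P] [DecidableEq V] :
    NetArch P V Unit (Multiset (P × P × V)) :=
  ⟨fun _ _ => (), bagInsert, bagRemove, 0⟩

/-! Global protocols, their semantics, CLTS implementations, implementability,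
and the Generalized Coherence Conditions. -/

/-- A global protocol: a labeled transition system over synchronous message
labels `(sender, receiver, value)`. -/
structure GProtocol (P V S : Type) where
  trans : S → P × P × V → S → Prop
  s0 : S
  final : S → Prop

namespace GProtocol

variable {P V S : Type}

/-- Finite runs of a global protocol. -/
inductive FinRun (G : GProtocol P V S) : S → List (P × P × V) → S → Prop
  | nil (s : S) : FinRun G s [] s
  | cons {s s' s'' : S} {m : P × P × V} {ρ : List (P × P × V)} :
      G.trans s m s' → FinRun G s' ρ s'' → FinRun G s (m :: ρ) s''

/-- A state is reachable if some finite run from the initial state ends in it. -/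
def Reachable (G : GProtocol P V S) (s : S) : Prop := ∃ ρ, G.FinRun G.s0 ρ s

/-- Sink finality: final states have no outgoing transitions. -/
def SinkFinal (G : GProtocol P V S) : Prop :=
  ∀ s, G.final s → ∀ m s', ¬ G.trans s m s'

/-- Sender-driven choice: all transitions leaving a state share the same sender,
and no two distinct transitions from a state carry the same label. -/
def SenderDriven (G : GProtocol P V S) : Prop :=
  (∀ s m₁ s₁ m₂ s₂, G.trans s m₁ s₁ → G.trans s m₂ s₂ → m₁.1 = m₂.1) ∧
  (∀ s m s₁ s₂, G.trans s m s₁ → G.trans s m s₂ → s₁ = s₂)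

/-- Deadlock freedom: every reachable non-final state has an outgoing transition. -/
def DeadlockFree (G : GProtocol P V S) : Prop :=
  ∀ s, G.Reachable s → ¬ G.final s → ∃ m s', G.trans s m s'

/-- Finite maximal traces: label sequences of finite runs ending in a final state. -/
def FinLang (G : GProtocol P V S) : Set (List (P × P × V)) :=
  {ρ | ∃ s, G.FinRun G.s0 ρ s ∧ G.final s}

/-- `g` is the trace of an infinite run from the initial state. -/
def InfRun (G : GProtocol P V S) (g : ℕ → P × P × V) : Prop :=
  ∃ f : ℕ → S, f 0 = G.s0 ∧ ∀ n, G.trans (f n) (g n) (f (n + 1))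

/-- The protocol re-initialized at state `s`. -/
def restart (G : GProtocol P V S) (s : S) : GProtocol P V S := { G with s0 := s }

end GProtocol

/-- `split` of an infinite synchronous word. -/
def splitInf {P V : Type} (g : ℕ → P × P × V) : ℕ → Event P V := fun n =>
  if n % 2 = 0 then Event.send (g (n / 2)).1 (g (n / 2)).2.1 (g (n / 2)).2.2
  else Event.recv (g (n / 2)).1 (g (n / 2)).2.1 (g (n / 2)).2.2

/-- The finite prefix of length `n` of an infinite word. -/
def takeInf {E : Type} (W : ℕ → E) (n : ℕ) : List E := List.ofFn (fun i : Fin n => W i)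

/-- Possibly infinite words. -/
inductive PWord (E : Type) where
  | fin (w : List E)
  | inf (W : ℕ → E)

/-- The finite prefix of length (at most) `n` of a possibly infinite word. -/
def PWord.take {E : Type} : PWord E → ℕ → List E
  | .fin w, n => w.take n
  | .inf W, n => takeInf W n

/-- A finite word is a prefix of a possibly infinite word. -/
def PWord.isPrefixOf {E : Type} (u : List E) (x : PWord E) : Prop :=
  x.take u.length = u

/-- The projection of `x` onto `r` is a prefix (as a possibly infinite word) of
the projection of `y` onto `r`, expressed via finite approximations. -/
def projLe {P V : Type} [DecidableEq P] (r : P) (x y : PWord (Event P V)) : Prop :=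
  ∀ n, ∃ m, proj r (x.take n) <+: proj r (y.take m)

/-- Equality under local projection for possibly infinite words. -/
def pequivP {P V : Type} [DecidableEq P] (x y : PWord (Event P V)) : Prop :=
  ∀ r : P, projLe r x y ∧ projLe r y x

namespace GProtocol

variable {P V S : Type}

/-- `split(L(𝒮))` as a set of possibly infinite asynchronous words. -/
def splitLang (G : GProtocol P V S) : Set (PWord (Event P V)) :=
  {x | (∃ ρ ∈ G.FinLang, x = PWord.fin (split ρ)) ∨
       (∃ g, G.InfRun g ∧ x = PWord.inf (splitInf g))}

/-- Finite protocol semantics: channel-compliant words equal under local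
projection to `split ρ` for some finite maximal trace ρ. -/
def finSem [DecidableEq P] {C B : Type} [DecidableEq C] (G : GProtocol P V S)
    (N : NetArch P V C B) : Set (List (Event P V)) :=
  {w | N.compliant w ∧ ∃ ρ ∈ G.FinLang, equivP w (split ρ)}

/-- Infinite protocol semantics: infinite words all of whose finite prefixes are
prefixes of a word in the local-projection closure of `split(L(𝒮))` all of whose
finite prefixes are channel-compliant. -/
def infSem [DecidableEq P] {C B : Type} [DecidableEq C] (G : GProtocol P V S)
    (N : NetArch P V C B) : Set (ℕ → Event P V) :=
  {W | ∀ n, ∃ x ∈ G.splitLang, ∃ y : PWord (Event P V),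
        pequivP x y ∧ (∀ k, N.compliant (y.take k)) ∧ PWord.isPrefixOf (takeInf W n) y}

/-- Finite prefixes of the protocol semantics. -/
def prefSem [DecidableEq P] {C B : Type} [DecidableEq C] (G : GProtocol P V S)
    (N : NetArch P V C B) : Set (List (Event P V)) :=
  {w | (∃ w' ∈ G.finSem N, w <+: w') ∨ (∃ W ∈ G.infSem N, w = takeInf W w.length)}

end GProtocol

/-- A communicating labeled transition system: one deterministic local LTS per
participant over the events in which that participant is active. -/
structure CLTS (P V : Type) (Q : P → Type) where
  δ : ∀ r : P, Q r → Event P V → Q r → Prop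
  q0 : ∀ r : P, Q r
  fin : ∀ r : P, Q r → Prop
  activeOnly : ∀ r q e q', δ r q e q' → Event.active e = r
  deterministic : ∀ r q e q₁ q₂, δ r q e q₁ → δ r q e q₂ → q₁ = q₂

namespace CLTS

variable {P V : Type} {Q : P → Type} {C B : Type}

/-- Configurations: a vector of local states paired with a channel state. -/
def Config (P V : Type) (Q : P → Type) (C B : Type) : Type :=
  ((r : P) → Q r) × (C → B)

/-- The initial configuration. -/
def initConfig (T : CLTS P V Q) (N : NetArch P V C B) : Config P V Q C B :=
  (fun r => T.q0 r, N.init)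

/-- A step of the CLTS: the active participant steps locally and the channel
state is updated by the corresponding buffer operation. -/
def CStep [DecidableEq P] [DecidableEq C] (T : CLTS P V Q) (N : NetArch P V C B) :
    Config P V Q C B → Event P V → Config P V Q C B → Prop :=
  fun c e c' =>
    T.δ e.active (c.1 e.active) e (c'.1 e.active) ∧
    (∀ r : P, r ≠ e.active → c'.1 r = c.1 r) ∧
    N.step e c.2 = some c'.2

/-- Final configurations: all local states final, all channels empty. -/
def IsFinal (T : CLTS P V Q) (N : NetArch P V C B) (c : Config P V Q C B) : Prop :=
  (∀ r : P, T.fin r (c.1 r)) ∧ c.2 = N.init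

/-- Finite runs of the CLTS. -/
inductive CRun [DecidableEq P] [DecidableEq C] (T : CLTS P V Q) (N : NetArch P V C B) :
    Config P V Q C B → List (Event P V) → Config P V Q C B → Prop
  | nil (c : Config P V Q C B) : CRun T N c [] c
  | cons {c c' c'' : Config P V Q C B} {e : Event P V} {w : List (Event P V)} :
      CStep T N c e c' → CRun T N c' w c'' → CRun T N c (e :: w) c''

/-- Finite maximal traces of the CLTS. -/
def finLang [DecidableEq P] [DecidableEq C] (T : CLTS P V Q) (N : NetArch P V C B) :
    Set (List (Event P V)) :=
  {w | ∃ c, CRun T N (initConfig T N) w c ∧ IsFinal T N c}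

/-- Infinite (maximal) traces of the CLTS. -/
def infLang [DecidableEq P] [DecidableEq C] (T : CLTS P V Q) (N : NetArch P V C B) :
    Set (ℕ → Event P V) :=
  {W | ∃ F : ℕ → Config P V Q C B, F 0 = initConfig T N ∧
        ∀ n, CStep T N (F n) (W n) (F (n + 1))}

/-- Deadlock freedom: every reachable configuration is final or has an outgoing step. -/
def DeadlockFree [DecidableEq P] [DecidableEq C] (T : CLTS P V Q)
    (N : NetArch P V C B) : Prop :=
  ∀ c w, CRun T N (initConfig T N) w c → IsFinal T N c ∨ ∃ e c', CStep T N c e c'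

end CLTS

/-- A protocol is implementable under a network architecture if some
deadlock-free CLTS realizes exactly the protocol semantics (protocol fidelity). -/
def Implementable {P V S C B : Type} [DecidableEq P] [DecidableEq C]
    (N : NetArch P V C B) (G : GProtocol P V S) : Prop :=
  ∃ (Q : P → Type) (T : CLTS P V Q),
    CLTS.DeadlockFree T N ∧
    CLTS.finLang T N = G.finSem N ∧
    CLTS.infLang T N = G.infSem N

namespace GProtocol

variable {P V S : Type}

/-- Projection of a synchronous word onto the messages involving `r`. -/
def syncProj [DecidableEq P] (r : P) (ρ : List (P × P × V)) :
    List (P × P × V) :=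
  ρ.filter (fun m => decide (m.1 = r) || decide (m.2.1 = r))

/-- `s` is reachable for participant `r` on the synchronous word `u`. -/
def ReachableFor [DecidableEq P] (G : GProtocol P V S) (r : P)
    (u : List (P × P × V)) (s : S) : Prop :=
  ∃ ρ, G.FinRun G.s0 ρ s ∧ syncProj r ρ = u

/-- `s₁` and `s₂` are simultaneously reachable by `r`. -/
def SimReach [DecidableEq P] (G : GProtocol P V S) (r : P) (s₁ s₂ : S) : Prop :=
  ∃ u, G.ReachableFor r u s₁ ∧ G.ReachableFor r u s₂

/-- Send Coherence. -/
def SendCoherence [DecidableEq P] (G : GProtocol P V S) : Prop :=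
  ∀ (p : P) (s₁ s₂ : S), G.SimReach p s₁ s₂ →
    ∀ (q : P) (v : V) (s₁' : S), G.trans s₁ (p, q, v) s₁' →
      ∃ s₂', G.trans s₂ (p, q, v) s₂'

/-- No Mixed Choice. -/
def NoMixedChoice [DecidableEq P] (G : GProtocol P V S) : Prop :=
  ∀ (r : P) (s₁ s₂ : S), G.SimReach r s₁ s₂ →
    ∀ (q : P) (v : V) (s₁' : S), G.trans s₁ (r, q, v) s₁' →
    ∀ (c : P) (v' : V) (s₂' : S), G.trans s₂ (c, r, v') s₂' → False

/-- Generalized Receive Coherence. -/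
def GenReceiveCoherence [DecidableEq P] {C B : Type} [DecidableEq C]
    (G : GProtocol P V S) (N : NetArch P V C B) : Prop :=
  ∀ (q : P) (s₁ s₁' : S), G.SimReach q s₁ s₁' →
    ∀ (p : P) (v : V) (s₂ : S), G.trans s₁ (p, q, v) s₂ →
    ∀ (c : P) (v' : V) (s₂' : S), G.trans s₁' (c, q, v') s₂' →
    (c ≠ p ∨ v' ≠ v) →
    ∀ w ∈ (G.restart s₁').prefSem N,
      proj q w = [] →
      (∃ t, proj c w = Event.send c q v' :: t) →
      ¬ N.compliant (w ++ [Event.recv p q v])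

/-- Prefix Extensibility. -/
def PrefixExtensible [DecidableEq P] {C B : Type} [DecidableEq C]
    (G : GProtocol P V S) (N : NetArch P V C B) : Prop :=
  ∀ (ρ : List (P × P × V)) (s : S), G.FinRun G.s0 ρ s →
    ∀ w : List (Event P V), N.compliant w →
      (∀ r : P, proj r w <+: proj r (split ρ)) →
      ∃ u, N.compliant (w ++ u) ∧ equivP (w ++ u) (split ρ)

end GProtocol

/-! ### Words and projections -/

section Words

variable {P V E : Type}

theorem takeInf_length (W : ℕ → E) (n : ℕ) : (takeInf W n).length = n := by
  simp [takeInf]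

theorem takeInf_succ (W : ℕ → E) (n : ℕ) : takeInf W (n + 1) = takeInf W n ++ [W n] := by
  unfold takeInf
  rw [List.ofFn_succ_last]
  simp

theorem takeInf_add (W : ℕ → E) (n k : ℕ) :
    takeInf W (n + k) = takeInf W n ++ takeInf (fun i => W (n + i)) k := by
  induction k with
  | zero => simp [takeInf]
  | succ k ih => rw [← Nat.add_assoc, takeInf_succ, ih, takeInf_succ, List.append_assoc]

theorem takeInf_mono (W : ℕ → E) {n m : ℕ} (h : n ≤ m) : takeInf W n <+: takeInf W m := by
  obtain ⟨k, rfl⟩ := Nat.exists_eq_add_of_le h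
  exact ⟨_, (takeInf_add W n k).symm⟩

/-- The infinite word obtained from `x` by replacing its first `w.length` letters by `w`. -/
def overwrite (w : List E) (x : ℕ → E) : ℕ → E := fun n =>
  if h : n < w.length then w[n] else x n

theorem takeInf_overwrite (w : List E) (x : ℕ → E) (k : ℕ) :
    takeInf (overwrite w x) (w.length + k) = w ++ takeInf (fun i => x (w.length + i)) k := by
  rw [takeInf_add]
  congr 1
  · apply List.ext_getElem
    · simp [takeInf]
    · intro i h1 h2
      simp [takeInf, overwrite]
  · congr 1
    funext i
    simp [overwrite]

theorem split_append (ρ σ : List (P × P × V)) : split (ρ ++ σ) = split ρ ++ split σ := by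
  induction ρ with
  | nil => rfl
  | cons m ρ ih => simp [split, ih]

theorem takeInf_splitInf (g : ℕ → P × P × V) (k : ℕ) :
    takeInf (splitInf g) (2 * k) = split (takeInf g k) := by
  induction k with
  | zero => rfl
  | succ k ih =>
    have h1 : (2 * k + 1) / 2 = k := by omega
    rw [show 2 * (k + 1) = 2 * k + 1 + 1 by ring, takeInf_succ, takeInf_succ, ih, takeInf_succ,
      split_append]
    simp [splitInf, split, h1]

theorem splitInf_shift (g : ℕ → P × P × V) (k : ℕ) :
    (fun i => splitInf g (2 * k + i)) = splitInf (fun i => g (k + i)) := by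
  funext i
  have h1 : (2 * k + i) / 2 = k + i / 2 := by omega
  have h2 : (2 * k + i) % 2 = i % 2 := by omega
  simp [splitInf, h1, h2]

variable [DecidableEq P]

theorem proj_append (r : P) (u w : List (Event P V)) : proj r (u ++ w) = proj r u ++ proj r w := by
  simp [proj]

theorem proj_mono (r : P) {u w : List (Event P V)} (h : u <+: w) : proj r u <+: proj r w :=
  List.IsPrefix.filter _ h

theorem proj_single (e : Event P V) : proj e.active [e] = [e] := by simp [proj]

theorem proj_single_ne (r : P) (e : Event P V) (h : e.active ≠ r) : proj r [e] = [] := by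
  simp [proj, h]

theorem count_proj [DecidableEq V] (e : Event P V) (w : List (Event P V)) :
    (proj e.active w).count e = w.count e := by
  unfold proj
  rw [List.count_filter]
  simp

theorem perm_of_equivP [DecidableEq V] {u w : List (Event P V)} (h : equivP u w) : u.Perm w := by
  rw [List.perm_iff_count]
  intro e
  rw [← count_proj e u, ← count_proj e w, h]

end Words

/-! ### Execution of words on channels -/

section Channels

variable {P V C B : Type} [DecidableEq C]

theorem runFrom_append (N : NetArch P V C B) (u w : List (Event P V)) (ξ : C → B) :
    N.runFrom (u ++ w) ξ = (N.runFrom u ξ).bind (N.runFrom w) := by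
  induction u generalizing ξ with
  | nil => rfl
  | cons e u ih =>
    simp only [List.cons_append, NetArch.runFrom]
    cases N.step e ξ with
    | none => rfl
    | some ξ' => simp [ih]

theorem compliant_prefix (N : NetArch P V C B) {u w : List (Event P V)} (h : u <+: w)
    (hw : N.compliant w) : N.compliant u := by
  obtain ⟨t, rfl⟩ := h
  unfold NetArch.compliant at *
  rw [runFrom_append] at hw
  cases hu : N.runFrom u N.init with
  | none => simp [hu] at hw
  | some ξ => rfl

/-- The FIFO architecture with channel map `κ`; p2p and senderbox are instances. -/
def fifo [DecidableEq P] [DecidableEq V] (κ : P → P → C) : NetArch P V C (List (P × P × V)) :=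
  ⟨κ, fifoInsert, fifoRemove, []⟩

/-- The messages sent to channel `c` in a word, in order. -/
def sent (κ : P → P → C) (c : C) (w : List (Event P V)) : List (P × P × V) :=
  w.filterMap fun e => match e with
    | .send p q v => if κ p q = c then some (p, q, v) else none
    | .recv _ _ _ => none

/-- The messages received from channel `c` in a word, in order. -/
def recvd (κ : P → P → C) (c : C) (w : List (Event P V)) : List (P × P × V) :=
  w.filterMap fun e => match e with
    | .send _ _ _ => none
    | .recv p q v => if κ p q = c then some (p, q, v) else none

theorem sent_append (κ : P → P → C) (c : C) (u w : List (Event P V)) :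
    sent κ c (u ++ w) = sent κ c u ++ sent κ c w := List.filterMap_append

theorem recvd_append (κ : P → P → C) (c : C) (u w : List (Event P V)) :
    recvd κ c (u ++ w) = recvd κ c u ++ recvd κ c w := List.filterMap_append

theorem sent_split (κ : P → P → C) (c : C) (ρ : List (P × P × V)) :
    sent κ c (split ρ) = recvd κ c (split ρ) := by
  induction ρ with
  | nil => rfl
  | cons m ρ ih =>
    simp only [sent, recvd] at ih
    simp only [sent, recvd, split, List.filterMap_cons]
    by_cases h : κ m.1 m.2.1 = c <;> simp [h, ih]

/-- If channel `κ p q` is used by the sender `p` only, what is sent to it is determined by the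
local behaviour of `p`. -/
theorem sent_proj [DecidableEq P] (κ : P → P → C) (hκ : ∀ p q p' q', κ p q = κ p' q' → p = p')
    (p q : P) (w : List (Event P V)) : sent κ (κ p q) (proj p w) = sent κ (κ p q) w := by
  induction w with
  | nil => rfl
  | cons e w ih =>
    rw [← List.singleton_append, proj_append, sent_append, sent_append, ih]
    congr 1
    by_cases h : e.active = p
    · simp [proj, h]
    · rw [proj_single_ne _ _ h]
      cases e with
      | recv => rfl
      | send p' q' v =>
        have : κ p' q' ≠ κ p q := fun hh => h (hκ _ _ _ _ hh)
        simp [sent, this]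

variable [DecidableEq P] [DecidableEq V]

theorem count_recvd (κ : P → P → C) (p q : P) (v : V) (w : List (Event P V)) :
    (recvd κ (κ p q) w).count (p, q, v) = w.count (Event.recv p q v) := by
  induction w with
  | nil => rfl
  | cons e w ih =>
    rw [← List.singleton_append, recvd_append, List.count_append, List.count_append, ih]
    congr 1
    cases e with
    | send => simp [recvd]
    | recv p' q' v' =>
      by_cases h : κ p' q' = κ p q
      · simp only [recvd, List.filterMap_cons, List.filterMap_nil, h, if_true, List.count_singleton]
        simp
      · have : ¬ (p' = p ∧ q' = q ∧ v' = v) := fun hh => h (by rw [hh.1, hh.2.1])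
        simp [recvd, h, this]

theorem fifoRemove_eq_some {M : Type} [DecidableEq M] {m : M} {b b' : List M} :
    fifoRemove m b = some b' ↔ b = m :: b' := by
  cases b with
  | nil => simp [fifoRemove]
  | cons a b =>
    by_cases h : a = m <;> simp [fifoRemove, h]

theorem fifo_run (κ : P → P → C) (w : List (Event P V)) (ξ ξ' : C → List (P × P × V))
    (h : (fifo κ).runFrom w ξ = some ξ') (c : C) :
    ξ c ++ sent κ c w = recvd κ c w ++ ξ' c := by
  induction w generalizing ξ with
  | nil =>
    simp only [NetArch.runFrom, Option.some.injEq] at h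
    simp [sent, recvd, h]
  | cons e w ih =>
    simp only [NetArch.runFrom] at h
    obtain ⟨ξ₁, h1, h2⟩ := Option.bind_eq_some_iff.1 h
    have := ih _ h2
    rw [← List.singleton_append, recvd_append, sent_append, List.append_assoc, ← this]
    cases e with
    | send p q v =>
      simp only [NetArch.step, fifo, fifoInsert, Option.map_some, Option.some.injEq] at h1
      subst h1
      by_cases hc : κ p q = c
      · subst hc; simp [sent, recvd]
      · simp [sent, recvd, hc, Function.update_of_ne (Ne.symm hc)]
    | recv p q v =>
      simp only [NetArch.step, fifo, Option.map_eq_some_iff] at h1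
      obtain ⟨b, hb, h1⟩ := h1
      rw [fifoRemove_eq_some] at hb
      subst h1
      by_cases hc : κ p q = c
      · subst hc; simp [sent, recvd, hb]
      · simp [sent, recvd, hc, Function.update_of_ne (Ne.symm hc)]

theorem fifo_run_split (κ : P → P → C) (ρ : List (P × P × V)) :
    (fifo κ).runFrom (split ρ) (fifo κ).init = some ((fifo (P := P) (V := V) κ).init) := by
  induction ρ with
  | nil => rfl
  | cons m ρ ih =>
    simp only [split, NetArch.runFrom]
    have : ((fifo κ).step (Event.send m.1 m.2.1 m.2.2) (fifo κ).init).bind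
        ((fifo κ).step (Event.recv m.1 m.2.1 m.2.2)) = some ((fifo (P := P) (V := V) κ).init) := by
      simp only [NetArch.step, fifo, fifoInsert, NetArch.init, Option.map_some, Option.bind_some,
        Function.update_self]
      simp [fifoRemove, Function.update_eq_self_iff]
      rfl
    rw [← Option.bind_assoc, this]
    exact ih

theorem fifo_recvd_prefix (κ : P → P → C) {w : List (Event P V)} (h : (fifo κ).compliant w)
    (c : C) : recvd κ c w <+: sent κ c w := by
  obtain ⟨ξ, hξ⟩ := Option.isSome_iff_exists.1 h
  have := fifo_run κ w _ _ hξ c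
  exact ⟨ξ c, this.symm⟩

theorem fifo_compliant_send (κ : P → P → C) {w : List (Event P V)} (h : (fifo κ).compliant w)
    (p q : P) (v : V) : (fifo κ).compliant (w ++ [Event.send p q v]) := by
  obtain ⟨ξ, hξ⟩ := Option.isSome_iff_exists.1 h
  unfold NetArch.compliant
  rw [runFrom_append, hξ]
  simp [NetArch.runFrom, NetArch.step, fifo, fifoInsert]

theorem fifo_compliant_recv (κ : P → P → C) {w : List (Event P V)} (h : (fifo κ).compliant w)
    (p q : P) (v : V) (hpre : recvd κ (κ p q) w ++ [(p, q, v)] <+: sent κ (κ p q) w) :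
    (fifo κ).compliant (w ++ [Event.recv p q v]) := by
  obtain ⟨ξ, hξ⟩ := Option.isSome_iff_exists.1 h
  have hr : sent κ (κ p q) w = recvd κ (κ p q) w ++ ξ (κ p q) := fifo_run κ w _ _ hξ (κ p q)
  obtain ⟨t, ht⟩ := hpre
  rw [hr, List.append_assoc, List.append_cancel_left_eq] at ht
  have hrem : fifoRemove (p, q, v) (ξ (κ p q)) = some t := fifoRemove_eq_some.2 ht.symm
  unfold NetArch.compliant
  rw [runFrom_append, hξ]
  simp [NetArch.runFrom, NetArch.step, fifo, hrem]

theorem fifo_matched_of_equivP (κ : P → P → C) {w : List (Event P V)} (h : (fifo κ).compliant w)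
    {ρ : List (P × P × V)} (hw : equivP w (split ρ)) :
    (fifo κ).runFrom w (fifo κ).init = some ((fifo (P := P) (V := V) κ).init) := by
  obtain ⟨ξ, hξ⟩ := Option.isSome_iff_exists.1 h
  rw [hξ]
  congr 1
  funext c
  have hr : sent κ c w = recvd κ c w ++ ξ c := fifo_run κ w _ _ hξ c
  have hp := perm_of_equivP hw
  have h1 : (sent κ c w).length = (sent κ c (split ρ)).length :=
    (hp.filterMap _).length_eq
  have h2 : (recvd κ c w).length = (recvd κ c (split ρ)).length :=
    (hp.filterMap _).length_eq
  have h3 := congrArg List.length hr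
  rw [List.length_append, h1, h2, sent_split] at h3
  exact List.eq_nil_of_length_eq_zero (by omega)

/-! ### Prefix extensibility of single-sender FIFO architectures -/

/-- A prefix `b` of `x` that extends `a` either equals `a` or contains the letter that follows
`a` in `x`. -/
theorem prefix_snoc_or_eq {E : Type} {a b x : List E} {e : E} (h1 : a <+: b) (h2 : b <+: x)
    (h3 : a ++ [e] <+: x) : a ++ [e] <+: b ∨ b = a := by
  rcases List.prefix_or_prefix_of_prefix h3 h2 with h | h
  · exact Or.inl h
  · rcases List.prefix_concat_iff.1 h with h | h
    · exact Or.inl (h ▸ List.prefix_rfl)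
    · exact Or.inr (h.eq_of_length_le h1.length_le)

/-- A step of the completion procedure: if `w` has performed (per participant) all of `z`, and the
next event `e` may be appended in case it has not been performed yet, then some extension of `w`
has performed all of `z ++ [e]`. -/
theorem extend_step (N : NetArch P V C B) {x w z : List (Event P V)} {e : Event P V}
    (hw : N.compliant w) (hx : ∀ r, proj r w <+: proj r x) (hz : ∀ r, proj r z <+: proj r w)
    (he : z ++ [e] <+: x)
    (hen : proj e.active w = proj e.active z → N.compliant (w ++ [e])) :
    ∃ u, N.compliant (w ++ u) ∧ (∀ r, proj r (w ++ u) <+: proj r x) ∧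
      ∀ r, proj r (z ++ [e]) <+: proj r (w ++ u) := by
  have hpe := proj_mono e.active he
  rw [proj_append, proj_single] at hpe
  rcases prefix_snoc_or_eq (hz e.active) (hx e.active) hpe with h | h
  · refine ⟨[], by simpa using hw, by simpa using hx, fun r => ?_⟩
    rw [List.append_nil, proj_append]
    by_cases hr : e.active = r
    · subst hr; rw [proj_single]; exact h
    · rw [proj_single_ne _ _ hr, List.append_nil]; exact hz r
  · refine ⟨[e], hen h, fun r => ?_, fun r => ?_⟩ <;> rw [proj_append]
    · by_cases hr : e.active = r
      · subst hr; rw [proj_single, h]; exact hpe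
      · rw [proj_single_ne _ _ hr, List.append_nil]; exact hx r
    · rw [proj_append]
      by_cases hr : e.active = r
      · subst hr; rw [h]
      · rw [proj_single_ne _ _ hr, List.append_nil, List.append_nil]; exact hz r

/-- The receive that is due in the completion procedure is enabled. -/
theorem recv_enabled (κ : P → P → C) (hκ : ∀ p q p' q', κ p q = κ p' q' → p = p')
    {w : List (Event P V)} (hw : (fifo κ).compliant w) (ρ : List (P × P × V)) (p q : P) (v : V)
    (hz : ∀ r, proj r (split ρ ++ [Event.send p q v]) <+: proj r w)
    (hq : proj q w = proj q (split ρ ++ [Event.send p q v])) :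
    (fifo κ).compliant (w ++ [Event.recv p q v]) := by
  apply fifo_compliant_recv κ hw
  have hsz : sent κ (κ p q) (split ρ ++ [Event.send p q v])
      = recvd κ (κ p q) (split ρ) ++ [(p, q, v)] := by
    rw [sent_append, sent_split]; simp [sent]
  have hsw : recvd κ (κ p q) (split ρ) ++ [(p, q, v)] <+: sent κ (κ p q) w := by
    rw [← hsz, ← sent_proj κ hκ p q w, ← sent_proj κ hκ p q (_ ++ _)]
    exact (hz p).filterMap _
  have hrw := fifo_recvd_prefix κ hw (κ p q)
  have hcount : (recvd κ (κ p q) w).count (p, q, v)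
      = (recvd κ (κ p q) (split ρ)).count (p, q, v) := by
    rw [count_recvd, count_recvd]
    have hc := congrArg (List.count (Event.recv p q v)) hq
    have e1 : ∀ u : List (Event P V), (proj q u).count (Event.recv p q v)
      = u.count (Event.recv p q v) := fun u => count_proj (Event.recv p q v) u
    rw [e1, e1] at hc
    simpa using hc
  -- every receive occurring in `split ρ` has been performed in `w`
  have hlen : (recvd κ (κ p q) (split ρ)).length ≤ (recvd κ (κ p q) w).length := by
    have hsub : (split ρ).Subperm w := by
      rw [List.subperm_ext_iff]
      intro e _
      rw [← count_proj e (split ρ), ← count_proj e w]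
      refine List.Sublist.count_le _ (List.IsPrefix.sublist ?_)
      exact (proj_mono _ (List.prefix_append _ _)).trans (hz _)
    obtain ⟨l, hl, hlw⟩ := hsub
    exact (hl.filterMap _).length_eq.symm.trans_le (hlw.filterMap _).length_le
  have hpre : recvd κ (κ p q) (split ρ) <+: recvd κ (κ p q) w :=
    List.prefix_of_prefix_length_le ((List.prefix_append _ _).trans hsw) hrw hlen
  rcases prefix_snoc_or_eq hpre hrw hsw with h | h
  · -- more receives than in `split ρ`: then `(p, q, v)` has been received once too often
    have := h.sublist.count_le (p, q, v)
    rw [hcount] at this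
    simp at this
  · rw [h]; exact hsw

theorem fifo_extend (κ : P → P → C) (hκ : ∀ p q p' q', κ p q = κ p' q' → p = p')
    (ρ : List (P × P × V)) {w : List (Event P V)} (hw : (fifo κ).compliant w)
    (hx : ∀ r, proj r w <+: proj r (split ρ)) :
    ∃ u, (fifo κ).compliant (w ++ u) ∧ equivP (w ++ u) (split ρ) := by
  suffices H : ∀ ρ₁, ρ₁ <+: ρ → ∃ u, (fifo κ).compliant (w ++ u) ∧
      (∀ r, proj r (w ++ u) <+: proj r (split ρ)) ∧
      ∀ r, proj r (split ρ₁) <+: proj r (w ++ u) by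
    obtain ⟨u, h1, h2, h3⟩ := H ρ List.prefix_rfl
    exact ⟨u, h1, fun r => (h2 r).eq_of_length_le (h3 r).length_le⟩
  intro ρ₁
  induction ρ₁ using List.reverseRecOn with
  | nil => exact fun _ => ⟨[], by simpa using hw, by simpa using hx, fun r => by simp [split, proj]⟩
  | append_singleton ρ₁ m ih =>
    intro hpre
    obtain ⟨p, q, v⟩ := m
    obtain ⟨u, h1, h2, h3⟩ := ih ((List.prefix_append _ _).trans hpre)
    have hs : split ρ₁ ++ [Event.send p q v] ++ [Event.recv p q v] <+: split ρ := by
      obtain ⟨t, rfl⟩ := hpre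
      rw [split_append, split_append]
      exact ⟨split t, by simp [split]⟩
    obtain ⟨u₁, h1, h2, h3⟩ := extend_step (fifo κ) h1 h2 h3 ((List.prefix_append _ _).trans hs)
      (fun _ => fifo_compliant_send κ h1 p q v)
    obtain ⟨u₂, h1, h2, h3⟩ := extend_step (fifo κ) h1 h2 h3 hs
      (fun hq => recv_enabled κ hκ h1 ρ₁ p q v h3 hq)
    refine ⟨u ++ u₁ ++ u₂, by simpa using h1, by simpa using h2, fun r => ?_⟩
    rw [split_append]
    simpa [split] using h3 r

/-- A compliant finite word that is consistent with a maximal run of the protocol extends to a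
compliant word, finite or infinite, with the same projections as that run. -/
theorem extend_word {S : Type} (κ : P → P → C) (hκ : ∀ p q p' q', κ p q = κ p' q' → p = p')
    (G : GProtocol P V S) {w : List (Event P V)} (hw : (fifo κ).compliant w)
    {x : PWord (Event P V)} (hx : x ∈ G.splitLang)
    (hwx : ∀ r, ∃ m, proj r w <+: proj r (x.take m)) :
    (∃ u, w ++ u ∈ G.finSem (fifo κ) ∧ pequivP x (.fin (w ++ u))) ∨
    (∃ Y : ℕ → Event P V, (∀ k, (fifo κ).compliant (takeInf Y k)) ∧
      pequivP x (.inf Y) ∧ takeInf Y w.length = w) := by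
  rcases hx with ⟨ρ, hρ, rfl⟩ | ⟨g, hg, rfl⟩
  · left
    have hx : ∀ r, proj r w <+: proj r (split ρ) := fun r => by
      obtain ⟨m, hm⟩ := hwx r
      exact hm.trans (proj_mono r (List.take_prefix _ _))
    obtain ⟨u, h1, h2⟩ := fifo_extend κ hκ ρ hw hx
    refine ⟨u, ⟨h1, ρ, hρ, h2⟩, fun r => ⟨fun n => ⟨(w ++ u).length, ?_⟩,
      fun n => ⟨(split ρ).length, ?_⟩⟩⟩
    · simp only [PWord.take, List.take_length]
      rw [h2 r]
      exact proj_mono r (List.take_prefix _ _)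
    · simp only [PWord.take, List.take_length]
      rw [← h2 r]
      exact proj_mono r (List.take_prefix _ _)
  · right
    choose m hm using hwx
    -- a bound that works for all participants, only finitely many of which are active in `w`
    let K := (w.map Event.active).toFinset.sup m
    have hx : ∀ r, proj r w <+: proj r (split (takeInf g K)) := fun r => by
      by_cases hr : r ∈ w.map Event.active
      · have hle : m r ≤ 2 * K := by
          have : m r ≤ K := Finset.le_sup (f := m) (List.mem_toFinset.2 hr)
          omega
        rw [← takeInf_splitInf]
        exact (hm r).trans (proj_mono r (takeInf_mono _ hle))
      · have : proj r w = [] := by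
          simp only [proj, List.filter_eq_nil_iff, decide_eq_true_eq]
          exact fun e he h => hr (h ▸ List.mem_map_of_mem he)
        rw [this]
        exact List.nil_prefix
    obtain ⟨u, h1, h2⟩ := fifo_extend κ hκ _ hw hx
    have hmat := fifo_matched_of_equivP κ h1 h2
    have hlen : (w ++ u).length = 2 * K := by
      rw [(perm_of_equivP h2).length_eq, ← takeInf_splitInf, takeInf_length]
    have htake : ∀ k, takeInf (overwrite (w ++ u) (splitInf g)) (2 * K + k)
        = w ++ u ++ takeInf (splitInf (fun i => g (K + i))) k := fun k => by
      have := takeInf_overwrite (w ++ u) (splitInf g) k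
      rwa [hlen, splitInf_shift] at this
    have htakex : ∀ k, takeInf (splitInf g) (2 * K + k)
        = split (takeInf g K) ++ takeInf (splitInf (fun i => g (K + i))) k := fun k => by
      rw [takeInf_add, takeInf_splitInf, splitInf_shift]
    have heq : ∀ r k, proj r (takeInf (overwrite (w ++ u) (splitInf g)) (2 * K + k))
        = proj r (takeInf (splitInf g) (2 * K + k)) := fun r k => by
      rw [htake, htakex, proj_append r (w ++ u), proj_append r (split _), h2 r]
    refine ⟨overwrite (w ++ u) (splitInf g), fun k => ?_, fun r => ⟨fun n => ⟨2 * K + n, ?_⟩,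
      fun n => ⟨2 * K + n, ?_⟩⟩, ?_⟩
    · have hk : k ≤ 2 * K + 2 * k := by omega
      apply compliant_prefix _ (takeInf_mono _ hk)
      rw [htake, takeInf_splitInf]
      unfold NetArch.compliant
      rw [runFrom_append, hmat, Option.bind_some, fifo_run_split]
      rfl
    · simp only [PWord.take]
      rw [heq]
      exact proj_mono r (takeInf_mono _ (by omega))
    · simp only [PWord.take]
      rw [← heq]
      exact proj_mono r (takeInf_mono _ (by omega))
    · have h0 := htake 0
      have hwl : w.length ≤ 2 * K + 0 := by rw [← hlen]; simp
      have hp := takeInf_mono (overwrite (w ++ u) (splitInf g)) hwl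
      rw [h0] at hp
      have hw' : w <+: w ++ u ++ takeInf (splitInf (fun i => g (K + i))) 0 := by
        rw [List.append_assoc]; exact List.prefix_append _ _
      exact (List.prefix_of_prefix_length_le hp hw'
        (by rw [takeInf_length])).eq_of_length (takeInf_length _ _)

end Channels

/-! ### Runs of a CLTS under different architectures -/

section Runs

open CLTS

variable {P V C B C' B' : Type} [DecidableEq P] [DecidableEq C] [DecidableEq C'] {Q : P → Type}

theorem crun_runFrom {T : CLTS P V Q} {N : NetArch P V C B} {c d : Config P V Q C B}
    {w : List (Event P V)} (h : CRun T N c w d) : N.runFrom w c.2 = some d.2 := by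
  induction h with
  | nil => rfl
  | cons hs _ ih => simp only [NetArch.runFrom, hs.2.2, Option.bind_some, ih]

/-- A run can be replayed under another architecture that is able to execute its trace. -/
theorem crun_transfer {T : CLTS P V Q} {N : NetArch P V C B} (N' : NetArch P V C' B')
    {c d : Config P V Q C B} {w : List (Event P V)} (h : CRun T N c w d)
    {ξ ξ' : C' → B'} (hξ : N'.runFrom w ξ = some ξ') : CRun T N' (c.1, ξ) w (d.1, ξ') := by
  induction h generalizing ξ with
  | nil c =>
    simp only [NetArch.runFrom, Option.some.injEq] at hξ
    subst hξ
    exact .nil _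
  | cons hs _ ih =>
    obtain ⟨ξ₁, h1, h2⟩ := Option.bind_eq_some_iff.1 hξ
    exact .cons ⟨hs.1, hs.2.1, h1⟩ (ih h2)

theorem cstep_unique {T : CLTS P V Q} {N : NetArch P V C B} {c d d' : Config P V Q C B}
    {e : Event P V} (h : CStep T N c e d) (h' : CStep T N c e d') : d = d' := by
  refine Prod.ext (funext fun r => ?_) (Option.some.inj (h.2.2.symm.trans h'.2.2))
  by_cases hr : r = e.active
  · subst hr
    exact T.deterministic _ _ _ _ _ h.1 h'.1
  · rw [h.2.1 r hr, h'.2.1 r hr]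

theorem crun_unique {T : CLTS P V Q} {N : NetArch P V C B} {c d d' : Config P V Q C B}
    {w : List (Event P V)} (h : CRun T N c w d) (h' : CRun T N c w d') : d = d' := by
  induction h with
  | nil => cases h'; rfl
  | cons hs _ ih =>
    cases h' with
    | cons hs' hr' =>
      cases cstep_unique hs hs'
      exact ih hr'

theorem crun_append {T : CLTS P V Q} {N : NetArch P V C B} {c d d' : Config P V Q C B}
    {u w : List (Event P V)} (h : CRun T N c u d) (h' : CRun T N d w d') :
    CRun T N c (u ++ w) d' := by
  induction h with
  | nil => exact h'
  | cons hs _ ih => exact .cons hs (ih h')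

theorem crun_split {T : CLTS P V Q} {N : NetArch P V C B} {c d : Config P V Q C B}
    {u w : List (Event P V)} (h : CRun T N c (u ++ w) d) :
    ∃ c', CRun T N c u c' ∧ CRun T N c' w d := by
  induction u generalizing c with
  | nil => exact ⟨c, .nil _, h⟩
  | cons e u ih =>
    cases h with
    | cons hs hr =>
      obtain ⟨c', h1, h2⟩ := ih hr
      exact ⟨c', .cons hs h1, h2⟩

theorem crun_takeInf {T : CLTS P V Q} {N : NetArch P V C B} {F : ℕ → Config P V Q C B}
    {W : ℕ → Event P V} (hF : ∀ n, CStep T N (F n) (W n) (F (n + 1))) (n : ℕ) :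
    CRun T N (F 0) (takeInf W n) (F n) := by
  induction n with
  | zero => exact .nil _
  | succ n ih =>
    rw [takeInf_succ]
    exact crun_append ih (.cons (hF n) (.nil _))

theorem infLang_compliant {T : CLTS P V Q} {N : NetArch P V C B} {W : ℕ → Event P V}
    (h : W ∈ infLang T N) (n : ℕ) : N.compliant (takeInf W n) := by
  obtain ⟨F, h0, hF⟩ := h
  have := crun_runFrom (crun_takeInf hF n)
  rw [h0] at this
  unfold NetArch.compliant
  change (N.runFrom _ (initConfig T N).2).isSome
  rw [this]
  rfl

theorem infLang_transfer {T : CLTS P V Q} {N : NetArch P V C B} (N' : NetArch P V C' B')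
    {W : ℕ → Event P V} (h : W ∈ infLang T N) (hc : ∀ n, N'.compliant (takeInf W n)) :
    W ∈ infLang T N' := by
  obtain ⟨F, h0, hF⟩ := h
  choose ξ hξ using fun n => Option.isSome_iff_exists.1 (hc n)
  refine ⟨fun n => ((F n).1, ξ n), ?_, fun n => ⟨(hF n).1, (hF n).2.1, ?_⟩⟩
  · have : N'.init = ξ 0 := Option.some.inj (hξ 0)
    change ((F 0).1, ξ 0) = _
    rw [h0, ← this]
    rfl
  · have := hξ (n + 1)
    rw [takeInf_succ, runFrom_append, hξ n] at this
    simpa [NetArch.runFrom] using this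

/-- A finite run followed by an infinite one. -/
theorem crun_prepend {T : CLTS P V Q} {N : NetArch P V C B} {c d : Config P V Q C B}
    {w : List (Event P V)} (h : CRun T N c w d) {F : ℕ → Config P V Q C B} {W : ℕ → Event P V}
    (h0 : F 0 = d) (hF : ∀ n, CStep T N (F n) (W n) (F (n + 1))) :
    ∃ (F' : ℕ → Config P V Q C B) (W' : ℕ → Event P V), F' 0 = c ∧
      (∀ n, CStep T N (F' n) (W' n) (F' (n + 1))) ∧ takeInf W' w.length = w := by
  induction h with
  | nil => exact ⟨F, W, h0, hF, rfl⟩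
  | @cons c c' d e w hs _ ih =>
    obtain ⟨F', W', h1, h2, h3⟩ := ih h0
    refine ⟨fun n => Nat.casesOn n c F', fun n => Nat.casesOn n e W', rfl, fun n => ?_, ?_⟩
    · cases n with
      | zero => simpa [h1] using hs
      | succ n => exact h2 n
    · have : takeInf (fun n => Nat.casesOn n e W' : ℕ → Event P V) (w.length + 1)
          = e :: takeInf W' w.length := by
        simp [takeInf, List.ofFn_succ]
      rw [List.length_cons, this, h3]

/-- In a deadlock-free CLTS, the trace of a run is a prefix of a maximal trace. -/
theorem exists_maximal {T : CLTS P V Q} {N : NetArch P V C B} (hdf : CLTS.DeadlockFree T N)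
    {c : Config P V Q C B} {w : List (Event P V)} (h : CRun T N (initConfig T N) w c) :
    (∃ u, w ++ u ∈ finLang T N) ∨ ∃ W ∈ infLang T N, takeInf W w.length = w := by
  by_cases hfin : ∃ u d, CRun T N c u d ∧ IsFinal T N d
  · obtain ⟨u, d, h1, h2⟩ := hfin
    exact Or.inl ⟨u, d, crun_append h h1, h2⟩
  · right
    push Not at hfin
    have hstep : ∀ d : {d // ∃ u, CRun T N c u d}, ∃ e, ∃ d' : {d // ∃ u, CRun T N c u d},
        CStep T N d.1 e d'.1 := by
      rintro ⟨d, u, hu⟩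
      rcases hdf d _ (crun_append h hu) with hf | ⟨e, d', hs⟩
      · exact absurd hf (hfin u d hu)
      · exact ⟨e, ⟨d', _, crun_append hu (.cons hs (.nil _))⟩, hs⟩
    choose e nxt hn using hstep
    let F : ℕ → {d // ∃ u, CRun T N c u d} := fun n => nxt^[n] ⟨c, [], .nil c⟩
    obtain ⟨F', W', h1, h2, h3⟩ := crun_prepend h (F := fun n => (F n).1) (W := fun n => e (F n))
      rfl (fun n => by
        have := hn (F n)
        simpa only [F, Function.iterate_succ_apply'] using this)
    exact ⟨W', ⟨F', h1, h2⟩, h3⟩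

end Runs

/-! ### Transfer of implementability -/

section Transfer

open CLTS

variable {P V S C B C' B' : Type} [DecidableEq P] [DecidableEq V] [DecidableEq C] [DecidableEq C']

/-- If `R` is a simulation between channel states of `N'` and of `N`, then every word executable
under `N'` is executable under `N`, with related results. -/
theorem simulation_run (N' : NetArch P V C' B') (N : NetArch P V C B)
    (R : (C' → B') → (C → B) → Prop)
    (hR : ∀ ξ' ξ e ξ₁', R ξ' ξ → N'.step e ξ' = some ξ₁' → ∃ ξ₁, N.step e ξ = some ξ₁ ∧ R ξ₁' ξ₁)
    (w : List (Event P V)) {ξ' ξ₁' : C' → B'} {ξ : C → B} (h : R ξ' ξ)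
    (hw : N'.runFrom w ξ' = some ξ₁') : ∃ ξ₁, N.runFrom w ξ = some ξ₁ ∧ R ξ₁' ξ₁ := by
  induction w generalizing ξ' ξ with
  | nil =>
    simp only [NetArch.runFrom, Option.some.injEq] at hw
    exact ⟨ξ, rfl, hw ▸ h⟩
  | cons e w ih =>
    obtain ⟨ξ₂', h1, h2⟩ := Option.bind_eq_some_iff.1 hw
    obtain ⟨ξ₂, h3, h4⟩ := hR _ _ _ _ h h1
    obtain ⟨ξ₁, h5, h6⟩ := ih h4 h2
    exact ⟨ξ₁, by simp only [NetArch.runFrom, h3, Option.bind_some, h5], h6⟩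

/-- An implementation under `N` is an implementation under a single-sender FIFO architecture
simulated by `N`, provided that the simulation relates empty channels to empty channels only. -/
theorem implementable_transfer (G : GProtocol P V S) (N : NetArch P V C B)
    (κ : P → P → C') (hκ : ∀ p q p' q', κ p q = κ p' q' → p = p')
    (R : (C' → List (P × P × V)) → (C → B) → Prop)
    (hR0 : R (fifo (P := P) (V := V) κ).init N.init)
    (hRe : ∀ ξ' ξ, R ξ' ξ → (ξ' = (fifo (P := P) (V := V) κ).init ↔ ξ = N.init))
    (hR : ∀ ξ' ξ e ξ₁', R ξ' ξ → (fifo κ).step e ξ' = some ξ₁' →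
      ∃ ξ₁, N.step e ξ = some ξ₁ ∧ R ξ₁' ξ₁)
    (himp : Implementable N G) : Implementable (fifo κ) G := by
  obtain ⟨Q, T, hdf, hfin, hinf⟩ := himp
  have hrun : ∀ {w : List (Event P V)} {ξ'}, (fifo κ).runFrom w (fifo κ).init = some ξ' →
      ∃ ξ, N.runFrom w N.init = some ξ ∧ R ξ' ξ :=
    fun h => simulation_run _ _ R hR _ hR0 h
  have hcomp : ∀ {w : List (Event P V)}, (fifo κ).compliant w → N.compliant w := fun h => by
    obtain ⟨ξ', h'⟩ := Option.isSome_iff_exists.1 h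
    obtain ⟨ξ, h1, -⟩ := hrun h'
    exact Option.isSome_iff_exists.2 ⟨ξ, h1⟩
  have hlift : ∀ {w c'}, CRun T (fifo κ) (initConfig T (fifo κ)) w c' →
      ∃ c, CRun T N (initConfig T N) w c ∧ c.1 = c'.1 ∧ R c'.2 c.2 := fun h => by
    obtain ⟨ξ, h1, h2⟩ := hrun (crun_runFrom h)
    exact ⟨_, crun_transfer N h h1, rfl, h2⟩
  -- the semantics under the FIFO architecture is contained in the language of `T`
  have hfin_sup : ∀ w ∈ G.finSem (fifo κ), w ∈ finLang T (fifo κ) := by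
    rintro w ⟨hw, hρ⟩
    have hN : w ∈ finLang T N := hfin ▸ ⟨hcomp hw, hρ⟩
    obtain ⟨c, h1, h2, h3⟩ := hN
    obtain ⟨ξ', h'⟩ := Option.isSome_iff_exists.1 hw
    obtain ⟨ξ, h4, h5⟩ := hrun h'
    have h6 : N.runFrom w N.init = some c.2 := crun_runFrom h1
    have h7 : ξ = N.init := by rw [← h3]; exact Option.some.inj (h4.symm.trans h6)
    exact ⟨_, crun_transfer (fifo κ) h1 h', h2, (hRe _ _ h5).2 h7⟩
  have hinf_sup : ∀ W ∈ G.infSem (fifo κ), W ∈ infLang T (fifo κ) := by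
    intro W hW
    have hN : W ∈ infLang T N := by
      rw [hinf]
      intro n
      obtain ⟨x, hx, y, h1, h2, h3⟩ := hW n
      exact ⟨x, hx, y, h1, fun k => hcomp (h2 k), h3⟩
    refine infLang_transfer _ hN fun n => ?_
    obtain ⟨x, hx, y, h1, h2, h3⟩ := hW n
    have := h2 (takeInf W n).length
    rwa [h3] at this
  -- an infinite word with compliant prefixes and the projections of a run is in the semantics
  have hmem : ∀ (Y : ℕ → Event P V) (x), x ∈ G.splitLang → pequivP x (.inf Y) →
      (∀ k, (fifo κ).compliant (takeInf Y k)) → Y ∈ G.infSem (fifo κ) :=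
    fun Y x hx h1 h2 n => ⟨x, hx, .inf Y, h1, h2, by simp [PWord.isPrefixOf, PWord.take,
      takeInf_length]⟩
  -- prefixes of infinite `N`-traces are consistent with a run
  have hcons : ∀ W ∈ infLang T N, ∀ n, ∃ x ∈ G.splitLang,
      ∀ r, ∃ m, proj r (takeInf W n) <+: proj r (x.take m) := by
    intro W hW n
    rw [hinf] at hW
    obtain ⟨x, hx, y, h1, -, h3⟩ := hW n
    refine ⟨x, hx, fun r => ?_⟩
    obtain ⟨m, hm⟩ := (h1 r).2 (takeInf W n).length
    rw [h3] at hm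
    exact ⟨m, hm⟩
  refine ⟨Q, T, ?_, Set.Subset.antisymm ?_ hfin_sup, Set.Subset.antisymm ?_ hinf_sup⟩
  · intro c' w hc'
    have hw : (fifo κ).compliant w := Option.isSome_iff_exists.2 ⟨_, crun_runFrom hc'⟩
    obtain ⟨c, hc, -, -⟩ := hlift hc'
    have hx : ∃ x ∈ G.splitLang, ∀ r, ∃ m, proj r w <+: proj r (x.take m) := by
      rcases exists_maximal hdf hc with ⟨u, hu⟩ | ⟨W, hW, hWw⟩
      · rw [hfin] at hu
        obtain ⟨-, ρ, hρ, heq⟩ := hu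
        refine ⟨.fin (split ρ), Or.inl ⟨ρ, hρ, rfl⟩, fun r => ⟨(split ρ).length, ?_⟩⟩
        simp only [PWord.take, List.take_length]
        rw [← heq r]
        exact proj_mono r (List.prefix_append _ _)
      · have := hcons W hW w.length
        rwa [hWw] at this
    obtain ⟨x, hx, hwx⟩ := hx
    rcases extend_word κ hκ G hw hx hwx with ⟨u, hu, -⟩ | ⟨Y, h1, h2, h3⟩
    · obtain ⟨d, hd, hdfin⟩ := hfin_sup _ hu
      obtain ⟨c₁, h4, h5⟩ := crun_split hd
      cases crun_unique hc' h4
      cases h5 with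
      | nil => exact Or.inl hdfin
      | cons hs _ => exact Or.inr ⟨_, _, hs⟩
    · obtain ⟨F, h0, hF⟩ := hinf_sup Y (hmem Y x hx h2 h1)
      have h4 := crun_takeInf hF w.length
      rw [h0, h3] at h4
      cases crun_unique hc' h4
      exact Or.inr ⟨_, _, hF _⟩
  · rintro w ⟨c', h1, h2, h3⟩
    obtain ⟨c, h4, h5, h6⟩ := hlift h1
    have hN : w ∈ finLang T N := ⟨c, h4, fun r => h5 ▸ h2 r, (hRe _ _ h6).1 h3⟩
    rw [hfin] at hN
    exact ⟨Option.isSome_iff_exists.2 ⟨_, crun_runFrom h1⟩, hN.2⟩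
  · intro W hW n
    have hc := infLang_compliant hW
    obtain ⟨x, hx, hwx⟩ := hcons W (infLang_transfer N hW fun n => hcomp (hc n)) n
    rcases extend_word κ hκ G (hc n) hx hwx with ⟨u, hu, hxu⟩ | ⟨Y, h1, h2, h3⟩
    · refine ⟨x, hx, _, hxu, fun k => compliant_prefix _ (List.take_prefix _ _) hu.1, ?_⟩
      simp [PWord.isPrefixOf, PWord.take]
    · exact ⟨x, hx, .inf Y, h2, h1, h3⟩

end Transfer

/-! ### The two simulations -/

section Simulations

variable {P V : Type} [DecidableEq P] [DecidableEq V]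

/-- The bag contains each message as often as the p2p channel the message belongs to. -/
def BagRel (ξ' : P × P → List (P × P × V)) (ξ : Unit → Multiset (P × P × V)) : Prop :=
  (∀ m, (ξ ()).count m = (ξ' (m.1, m.2.1)).count m) ∧ ∀ c, ∀ m ∈ ξ' c, (m.1, m.2.1) = c

theorem bagRel_step (ξ' : P × P → List (P × P × V)) (ξ : Unit → Multiset (P × P × V))
    (e : Event P V) (ξ₁' : P × P → List (P × P × V)) (h : BagRel ξ' ξ)
    (hs : (p2p P V).step e ξ' = some ξ₁') :
    ∃ ξ₁, (bag P V).step e ξ = some ξ₁ ∧ BagRel ξ₁' ξ₁ := by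
  obtain ⟨h1, h2⟩ := h
  cases e with
  | send p q v =>
    simp only [NetArch.step, p2p, fifoInsert, Option.map_some, Option.some.injEq] at hs
    subst hs
    refine ⟨_, rfl, fun m => ?_, fun c m hm => ?_⟩
    · obtain ⟨p', q', v'⟩ := m
      have := h1 (p', q', v')
      by_cases hc : (p', q') = (p, q)
      · obtain ⟨rfl, rfl⟩ := Prod.mk.inj hc
        by_cases hv : v' = v
        · subst hv
          simp [bag, this]
        · simp [bag, this, hv, Ne.symm hv]
      · have hne : (p', q', v') ≠ (p, q, v) := fun hh => hc (by simp_all)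
        simp_all [bag]
    · by_cases hc : c = (p, q)
      · subst hc
        simp only [Function.update_self, List.mem_append, List.mem_singleton] at hm
        rcases hm with hm | rfl
        · exact h2 _ _ hm
        · rfl
      · rw [Function.update_of_ne hc] at hm
        exact h2 _ _ hm
  | recv p q v =>
    simp only [NetArch.step, p2p, Option.map_eq_some_iff] at hs
    obtain ⟨b, hb, hs⟩ := hs
    rw [fifoRemove_eq_some] at hb
    subst hs
    have hmem : (p, q, v) ∈ ξ () := by
      rw [← Multiset.count_pos, h1, hb]
      simp
    refine ⟨fun _ => (ξ ()).erase (p, q, v), ?_, fun m => ?_, fun c m hm => ?_⟩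
    · simp only [NetArch.step, bag, bagRemove, hmem, if_true, Option.map_some, Option.some.injEq]
      funext c
      cases c
      simp
    · obtain ⟨p', q', v'⟩ := m
      have := h1 (p', q', v')
      by_cases hm : (p', q', v') = (p, q, v)
      · cases hm
        simp_all
      · rw [Multiset.count_erase_of_ne hm, this]
        by_cases hc : (p', q') = (p, q)
        · obtain ⟨rfl, rfl⟩ := Prod.mk.inj hc
          simp [hb, Ne.symm hm]
        · simp [Function.update_of_ne hc]
    · by_cases hc : c = (p, q)
      · subst hc
        simp only [Function.update_self] at hm
        exact h2 _ _ (hb ▸ List.mem_cons_of_mem _ hm)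
      · rw [Function.update_of_ne hc] at hm
        exact h2 _ _ hm

theorem bagRel_empty (ξ' : P × P → List (P × P × V)) (ξ : Unit → Multiset (P × P × V))
    (h : BagRel ξ' ξ) : ξ' = (p2p P V).init ↔ ξ = (bag P V).init := by
  obtain ⟨h1, h2⟩ := h
  constructor
  · rintro rfl
    funext c
    cases c
    refine Multiset.ext.2 fun m => ?_
    rw [h1]
    simp [p2p, bag, NetArch.init]
  · rintro rfl
    funext c
    refine List.eq_nil_iff_forall_not_mem.2 fun m hm => ?_
    have h3 := h1 m
    rw [h2 c m hm] at h3
    have h4 := List.count_pos_iff.2 hm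
    rw [← h3] at h4
    simp [bag, NetArch.init] at h4

/-- Each p2p channel holds the messages of the sender's box addressed to its receiver. -/
def BoxRel (ξ' : P → List (P × P × V)) (ξ : P × P → List (P × P × V)) : Prop :=
  ∀ p q, ξ (p, q) = (ξ' p).filter fun m => decide (m.2.1 = q)

theorem boxRel_step (ξ' : P → List (P × P × V)) (ξ : P × P → List (P × P × V))
    (e : Event P V) (ξ₁' : P → List (P × P × V)) (h : BoxRel ξ' ξ)
    (hs : (sb P V).step e ξ' = some ξ₁') :
    ∃ ξ₁, (p2p P V).step e ξ = some ξ₁ ∧ BoxRel ξ₁' ξ₁ := by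
  cases e with
  | send p q v =>
    simp only [NetArch.step, sb, fifoInsert, Option.map_some, Option.some.injEq] at hs
    subst hs
    refine ⟨_, rfl, fun p' q' => ?_⟩
    have := h p' q'
    by_cases hp : p' = p
    · subst hp
      by_cases hq : q' = q
      · subst hq
        simp [p2p, this]
      · simp [p2p, this, hq, Ne.symm hq]
    · simp [p2p, this, hp]
  | recv p q v =>
    simp only [NetArch.step, sb, Option.map_eq_some_iff] at hs
    obtain ⟨b, hb, hs⟩ := hs
    rw [fifoRemove_eq_some] at hb
    subst hs
    have hrem : fifoRemove (p, q, v) (ξ (p, q)) = some (b.filter fun m => decide (m.2.1 = q)) := by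
      rw [fifoRemove_eq_some, h p q, hb]
      simp
    refine ⟨_, by simp only [NetArch.step, p2p, hrem, Option.map_some]; rfl, fun p' q' => ?_⟩
    have := h p' q'
    by_cases hp : p' = p
    · subst hp
      by_cases hq : q' = q
      · subst hq
        simp
      · simp [this, hb, hq, Ne.symm hq]
    · simp [this, hp]

theorem boxRel_empty (ξ' : P → List (P × P × V)) (ξ : P × P → List (P × P × V))
    (h : BoxRel ξ' ξ) : ξ' = (sb P V).init ↔ ξ = (p2p P V).init := by
  constructor
  · rintro rfl
    funext ⟨p, q⟩
    rw [h p q]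
    simp [sb, p2p, NetArch.init]
  · rintro rfl
    funext p
    refine List.eq_nil_iff_forall_not_mem.2 fun m hm => ?_
    have h3 : m ∈ (ξ' p).filter fun m' => decide (m'.2.1 = m.2.1) := by simpa using hm
    rw [← h p m.2.1] at h3
    simp [p2p, NetArch.init] at h3

end Simulations

/-- Implementability relationships: every bag-implementable global protocol is
p2p-implementable, and every p2p-implementable global protocol is
senderbox-implementable. -/
theorem implementability_relationships
    {P V S : Type} [DecidableEq P] [DecidableEq V]
    (G : GProtocol P V S)
    (hval : ∀ s m s', G.trans s m s' → m.1 ≠ m.2.1)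
    (hsink : G.SinkFinal) (hsd : G.SenderDriven) (hdf : G.DeadlockFree) :
    (Implementable (bag P V) G → Implementable (p2p P V) G) ∧
    (Implementable (p2p P V) G → Implementable (sb P V) G) := by
  constructor
  · exact implementable_transfer G (bag P V) (fun p q => (p, q))
      (fun _ _ _ _ h => (Prod.mk.inj h).1) BagRel
      ⟨fun m => by simp [bag, fifo, NetArch.init], fun c m hm => by simp [fifo, NetArch.init] at hm⟩
      bagRel_empty bagRel_step
  · exact implementable_transfer G (p2p P V) (fun p _ => p) (fun _ _ _ _ h => h) BoxRel
      (fun p q => by simp [p2p, fifo, NetArch.init]) boxRel_empty boxRel_step
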